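/- arXiv:0708.3352 — 3 statements merged into one kernel-verified Lean document; each statement's English description precedes it below -/
import Mathlib

section
/- Let g ∈ (0,4) be a constant. Every regular perfect fluid solution with non-decreasing equation of state f whose pressure–density ratio satisfies p(r)/f(p(r)) < 2/√g − 1 for all r ∈ [0,R) obeys the surface bound 2M/R ≤ (8−2g)/(9−2g), where M = m(R) is the total mass and R the surface radius. -/
/-- The barrier function used in the proof. -/
noncomputable def buchQ (m p : ℝ → ℝ) (r : ℝ) : ℝ :=
  (1 - 2 * m r / r) * ((3 * m r + 4 * Real.pi * r ^ 3 * p r) /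
    (m r + 4 * Real.pi * r ^ 3 * p r)) ^ 2

theorem buchQ_hasDerivAt (m p : ℝ → ℝ) (r ρ : ℝ) (hr : 0 < r) (hm : 0 < m r)
    (h2 : 2 * m r < r) (hp : 0 < p r) (hρ : 0 < ρ)
    (h1 : HasDerivAt m (4 * Real.pi * r ^ 2 * ρ) r)
    (h3 : HasDerivAt p (-(ρ * m r / r ^ 2) * (1 + p r / ρ) *
        (1 + 4 * Real.pi * r ^ 3 * p r / m r) * (1 - 2 * m r / r)⁻¹) r) :
    HasDerivAt (buchQ m p) (2 * (3 * m r + 4 * Real.pi * r ^ 3 * p r) *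
      (3 * m r - 4 * Real.pi * r ^ 3 * ρ) /
      (r ^ 2 * (m r + 4 * Real.pi * r ^ 3 * p r) ^ 3) *
      ((m r + 4 * Real.pi * r ^ 3 * p r) ^ 2
        - 2 * (4 * Real.pi * r ^ 3 * p r) * (r - 2 * m r))) r := by
  have hpi := Real.pi_pos
  have hP : 0 < 4 * Real.pi * r ^ 3 * p r := by positivity
  have hD : m r + 4 * Real.pi * r ^ 3 * p r ≠ 0 := by positivity
  have hx : r - 2 * m r ≠ 0 := by linarith
  have e : -(ρ * m r / r ^ 2) * (1 + p r / ρ) *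
        (1 + 4 * Real.pi * r ^ 3 * p r / m r) * (1 - 2 * m r / r)⁻¹
      = -((ρ + p r) * (m r + 4 * Real.pi * r ^ 3 * p r) / (r * (r - 2 * m r))) := by
    have : 1 - 2 * m r / r = (r - 2 * m r) / r := by field_simp
    rw [this]
    field_simp
  rw [e] at h3
  have hid := hasDerivAt_id r
  have hPd := (((hid.pow 3).const_mul (4 * Real.pi)).mul h3)
  have hN := (h1.const_mul 3).add hPd
  have hDd := h1.add hPd
  have hA := ((h1.const_mul 2).div hid hr.ne').const_sub 1
  have hF := hA.mul ((hN.div hDd (by simpa using hD)).pow 2)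
  refine (hF.congr_deriv ?_)
  simp only [id, Pi.add_apply, Pi.mul_apply, Pi.pow_apply, Pi.div_apply]
  generalize m r = M at *
  generalize p r = q at *
  generalize Real.pi = π at *
  norm_num
  field_simp
  ring

theorem avg_density (R : ℝ) (f m p : ℝ → ℝ)
    (hf_mono : MonotoneOn f (Set.Ici 0))
    (hm_cont : ContinuousOn m (Set.Icc 0 R))
    (hm0 : m 0 = 0)
    (hp_pos : ∀ r ∈ Set.Ico 0 R, 0 < p r)
    (hp_anti : AntitoneOn p (Set.Icc 0 R))
    (hTOV_m : ∀ r ∈ Set.Ioo 0 R,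
      HasDerivAt m (4 * Real.pi * r ^ 2 * f (p r)) r) (r : ℝ) (hr : r ∈ Set.Ioo 0 R) :
    4 * Real.pi * r ^ 3 * f (p r) ≤ 3 * m r := by
  have hpi := Real.pi_pos
  have key : MonotoneOn (fun t => m t - (4 * Real.pi / 3 * f (p r)) * t ^ 3) (Set.Icc 0 r) := by
    refine monotoneOn_of_hasDerivWithinAt_nonneg (convex_Icc 0 r)
      (f' := fun t => 4 * Real.pi * t ^ 2 * f (p t)
        - (4 * Real.pi / 3 * f (p r)) * (3 * t ^ 2)) ?_ ?_ ?_
    · refine (hm_cont.mono (Set.Icc_subset_Icc_right hr.2.le)).sub ?_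
      fun_prop
    · intro t ht
      rw [interior_Icc] at ht
      have h1 := hTOV_m t ⟨ht.1, ht.2.trans hr.2⟩
      have h2 := (hasDerivAt_pow 3 t).const_mul (4 * Real.pi / 3 * f (p r))
      have h3 := h1.sub h2
      norm_num at h3
      exact h3.hasDerivWithinAt
    · intro t ht
      rw [interior_Icc] at ht
      have hpp : p r ≤ p t := hp_anti ⟨ht.1.le, (ht.2.trans hr.2).le⟩ ⟨hr.1.le, hr.2.le⟩ ht.2.le
      have hff : f (p r) ≤ f (p t) := hf_mono
        (hp_pos r ⟨hr.1.le, hr.2⟩).le (hp_pos t ⟨ht.1.le, ht.2.trans hr.2⟩).le hpp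
      have : 0 ≤ 4 * Real.pi * t ^ 2 * (f (p t) - f (p r)) :=
        mul_nonneg (by positivity) (by linarith)
      linarith
  have := key (Set.left_mem_Icc.2 hr.1.le) (Set.right_mem_Icc.2 hr.1.le) hr.1.le
  simp only [hm0] at this
  norm_num at this
  linarith

/-- **Generalized Buchdahl surface inequality.**
Let `g ∈ (0,4)`. Every regular perfect fluid solution (in units `G = c = 1`) with a
non-decreasing equation of state `ρ = f(p)` whose pressure–density ratio satisfies
`p(r)/f(p(r)) < 2/√g − 1` for all `r ∈ [0,R)` obeys `2M/R ≤ (8−2g)/(9−2g)`,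
where `M = m(R)` is the total mass and `R` the surface radius. -/
theorem generalized_buchdahl_surface_inequality
    (g : ℝ) (hg0 : 0 < g) (hg4 : g < 4)
    (R : ℝ) (hR : 0 < R)
    (f : ℝ → ℝ)
    (hf_nonneg : ∀ q : ℝ, 0 ≤ q → 0 ≤ f q)
    (hf_mono : MonotoneOn f (Set.Ici 0))
    (hf_cont : ContinuousOn f (Set.Ici 0))
    (hf_pos : ∀ q : ℝ, 0 < q → 0 < f q)
    (m p : ℝ → ℝ)
    (hm_cont : ContinuousOn m (Set.Icc 0 R))
    (hp_cont : ContinuousOn p (Set.Icc 0 R))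
    (hm0 : m 0 = 0)
    (hm_pos : ∀ r ∈ Set.Ioo 0 R, 0 < m r)
    (h2m : ∀ r ∈ Set.Ioo 0 R, 2 * m r < r)
    (hp_pos : ∀ r ∈ Set.Ico 0 R, 0 < p r)
    (hpR : p R = 0)
    (hTOV_m : ∀ r ∈ Set.Ioo 0 R,
      HasDerivAt m (4 * Real.pi * r ^ 2 * f (p r)) r)
    (hTOV_p : ∀ r ∈ Set.Ioo 0 R,
      HasDerivAt p (-(f (p r) * m r / r ^ 2) * (1 + p r / f (p r)) *
        (1 + 4 * Real.pi * r ^ 3 * p r / m r) * (1 - 2 * m r / r)⁻¹) r)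
    (hreg : Filter.Tendsto (fun r => m r / r ^ 3) (nhdsWithin 0 (Set.Ioi 0))
      (nhds (4 * Real.pi / 3 * f (p 0))))
    (hsigma : ∀ r ∈ Set.Ico 0 R, p r / f (p r) < 2 / Real.sqrt g - 1) :
    2 * m R / R ≤ (8 - 2 * g) / (9 - 2 * g) := by
  have hpi := Real.pi_pos
  have hfp : ∀ r ∈ Set.Ico 0 R, 0 < f (p r) := fun r hr => hf_pos _ (hp_pos r hr)
  have hK : 0 < 9 - 2 * g := by linarith
  -- squared form of the pressure-density condition
  have hs : ∀ r ∈ Set.Ico 0 R, g * (f (p r) + p r) ^ 2 < 4 * f (p r) ^ 2 := by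
    intro r hr
    have h1 := hsigma r hr
    have hf := hfp r hr
    have hp := hp_pos r hr
    have hsg := Real.sqrt_pos.2 hg0
    have hsq := Real.sq_sqrt hg0.le
    have h2 : (f (p r) + p r) / f (p r) < 2 / Real.sqrt g := by
      rw [add_div, div_self hf.ne']; linarith
    rw [div_lt_div_iff₀ hf hsg] at h2
    have h3 : ((f (p r) + p r) * Real.sqrt g) ^ 2 < (2 * f (p r)) ^ 2 :=
      pow_lt_pow_left₀ h2 (by positivity) (by norm_num)
    rw [mul_pow, hsq] at h3
    nlinarith
  have hp_anti : AntitoneOn p (Set.Icc 0 R) := by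
    refine antitoneOn_of_hasDerivWithinAt_nonpos (convex_Icc 0 R) hp_cont
      (fun t ht => (hTOV_p t (by rwa [interior_Icc] at ht)).hasDerivWithinAt) ?_
    intro t ht
    rw [interior_Icc] at ht
    have a1 := hm_pos t ht
    have a2 := hp_pos t ⟨ht.1.le, ht.2⟩
    have a3 := hfp t ⟨ht.1.le, ht.2⟩
    have a4 := ht.1
    have a5 : 0 < 1 - 2 * m t / t := by
      rw [sub_pos, div_lt_one a4]; exact h2m t ht
    rw [neg_mul, neg_mul, neg_mul]
    have : 0 ≤ f (p t) * m t / t ^ 2 * (1 + p t / f (p t)) *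
      (1 + 4 * Real.pi * t ^ 3 * p t / m t) * (1 - 2 * m t / t)⁻¹ := by positivity
    linarith
  have havg := avg_density R f m p hf_mono hm_cont hm0 hp_pos hp_anti hTOV_m
  have hder := fun r (hr : r ∈ Set.Ioo 0 R) =>
    buchQ_hasDerivAt m p r (f (p r)) hr.1 (hm_pos r hr) (h2m r hr)
      (hp_pos r ⟨hr.1.le, hr.2⟩) (hfp r ⟨hr.1.le, hr.2⟩) (hTOV_m r hr) (hTOV_p r hr)
  -- the barrier derivative is nonnegative below the threshold
  have hbar : ∀ r ∈ Set.Ioo 0 R, buchQ m p r ≤ 9 / (9 - 2 * g) →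
      0 ≤ deriv (buchQ m p) r := by
    intro r hr hq
    rw [(hder r hr).deriv]
    have hM := hm_pos r hr
    have hp := hp_pos r ⟨hr.1.le, hr.2⟩
    have hf := hfp r ⟨hr.1.le, hr.2⟩
    have hr0 := hr.1
    have hx := h2m r hr
    have hav := havg r hr
    have hss := hs r ⟨hr.1.le, hr.2⟩
    have hPpos : 0 < 4 * Real.pi * r ^ 3 * p r := by positivity
    have hN : g * (3 * m r + 4 * Real.pi * r ^ 3 * p r) ^ 2 ≤ 36 * m r ^ 2 := by
      -- P * ρ = E * p, E ≤ 3 m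
      have hPf : 4 * Real.pi * r ^ 3 * p r * f (p r) ≤ 3 * m r * p r := by
        have := mul_le_mul_of_nonneg_right hav hp.le
        linarith
      have h1 : (3 * m r + 4 * Real.pi * r ^ 3 * p r) * f (p r)
          ≤ 3 * m r * (f (p r) + p r) := by linarith
      have h2 := pow_le_pow_left₀ (by positivity) h1 2
      have h3 : g * (3 * m r + 4 * Real.pi * r ^ 3 * p r) ^ 2 * f (p r) ^ 2
          ≤ 36 * m r ^ 2 * f (p r) ^ 2 := by
        have h4 := mul_le_mul_of_nonneg_left h2 hg0.le
        have h5 := mul_le_mul_of_nonneg_left hss.le (show 0 ≤ 9 * m r ^ 2 by positivity)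
        linarith
      exact le_of_mul_le_mul_right h3 (by positivity)
    unfold buchQ at hq
    generalize 4 * Real.pi * r ^ 3 * p r = P at *
    have hD : 0 < m r + P := by positivity
    have hq2 : (r - 2 * m r) * (3 * m r + P) ^ 2 * (9 - 2 * g) ≤ 9 * r * (m r + P) ^ 2 := by
      have e : (1 - 2 * m r / r) * ((3 * m r + P) / (m r + P)) ^ 2
          = (r - 2 * m r) * (3 * m r + P) ^ 2 / (r * (m r + P) ^ 2) := by
        field_simp
      rw [e, div_le_div_iff₀ (by positivity) hK] at hq
      linarith
    have hbr : 0 ≤ (m r + P) ^ 2 - 2 * P * (r - 2 * m r) := by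
      have h1 : (r - 2 * m r) * (9 * (3 * m r + P) ^ 2 - 72 * m r ^ 2)
          ≤ 9 * r * (m r + P) ^ 2 := by
        have h2 := mul_le_mul_of_nonneg_left hN (show 0 ≤ 2 * (r - 2 * m r) by linarith)
        linarith
      have h3 : 0 ≤ m r * ((m r + P) ^ 2 - 2 * P * (r - 2 * m r)) := by
        linarith
      exact nonneg_of_mul_nonneg_right h3 hM
    refine mul_nonneg (div_nonneg (mul_nonneg (by positivity) (by linarith)) (by positivity)) hbr
  -- behaviour at the centre
  have hcent : ∀ᶠ r in nhdsWithin (0:ℝ) (Set.Ioi 0), 9 / (9 - 2 * g) < buchQ m p r := by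
    have h0 : (0:ℝ) ∈ Set.Ico 0 R := ⟨le_rfl, hR⟩
    have hf0 := hfp 0 h0
    have hp0 := hp_pos 0 h0
    have hs0 := hs 0 h0
    have hpt : Filter.Tendsto p (nhdsWithin 0 (Set.Ioi 0)) (nhds (p 0)) := by
      have h1 := (hp_cont 0 ⟨le_rfl, hR.le⟩)
      have h2 : ContinuousWithinAt p (Set.Ioo 0 R) 0 := h1.mono Set.Ioo_subset_Icc_self
      have h3 := h2.tendsto
      rwa [nhdsWithin_Ioo_eq_nhdsGT hR] at h3
    have hrt : Filter.Tendsto (fun r : ℝ => r) (nhdsWithin 0 (Set.Ioi 0)) (nhds 0) :=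
      tendsto_nhdsWithin_of_tendsto_nhds Filter.tendsto_id
    have hP4 := hpt.const_mul (4 * Real.pi)
    have hlim := (((hrt.pow 2).const_mul 2).mul hreg).const_sub 1 |>.mul
      ((((hreg.const_mul 3).add hP4).div (hreg.add hP4) (by positivity)).pow 2)
    have hlt : 9 / (9 - 2 * g) < (1 - 2 * 0 ^ 2 * (4 * Real.pi / 3 * f (p 0))) *
        ((3 * (4 * Real.pi / 3 * f (p 0)) + 4 * Real.pi * p 0) /
        (4 * Real.pi / 3 * f (p 0) + 4 * Real.pi * p 0)) ^ 2 := by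
      have e : (1 - 2 * 0 ^ 2 * (4 * Real.pi / 3 * f (p 0))) *
        ((3 * (4 * Real.pi / 3 * f (p 0)) + 4 * Real.pi * p 0) /
        (4 * Real.pi / 3 * f (p 0) + 4 * Real.pi * p 0)) ^ 2
        = 9 * (f (p 0) + p 0) ^ 2 / (f (p 0) + 3 * p 0) ^ 2 := by
        field_simp
        ring
      rw [e, div_lt_div_iff₀ hK (by positivity)]
      nlinarith [mul_pos hf0 hp0]
    have hev := hlim.eventually (lt_mem_nhds hlt)
    filter_upwards [hev, self_mem_nhdsWithin, Ioo_mem_nhdsGT hR] with r hr hr0 hrR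
    have hr0' : 0 < r := hr0
    have hM := hm_pos r hrR
    have hp := hp_pos r ⟨hrR.1.le, hrR.2⟩
    have e2 : buchQ m p r = (1 - 2 * r ^ 2 * (m r / r ^ 3)) *
        ((3 * (m r / r ^ 3) + 4 * Real.pi * p r) /
        (m r / r ^ 3 + 4 * Real.pi * p r)) ^ 2 := by
      unfold buchQ
      field_simp
    rw [e2]
    exact hr
  -- the barrier holds everywhere
  have hmain : ∀ r ∈ Set.Ioo 0 R, 9 / (9 - 2 * g) ≤ buchQ m p r := by
    intro b hb
    by_contra hlt
    push Not at hlt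
    obtain ⟨a, ha, haq⟩ := ((Ioo_mem_nhdsGT hb.1 : Set.Ioo 0 b ∈ nhdsWithin (0:ℝ) _)
      |> (fun h => (Filter.Eventually.and h hcent).exists))
    have hsub : Set.Icc a b ⊆ Set.Ioo 0 R := fun t ht =>
      ⟨ha.1.trans_le ht.1, ht.2.trans_lt hb.2⟩
    have hc : ContinuousOn (buchQ m p) (Set.Icc a b) := fun t ht =>
      (hder t (hsub ht)).continuousAt.continuousWithinAt
    -- last point where the barrier is attained
    let S := Set.Icc a b ∩ buchQ m p ⁻¹' Set.Ici (9 / (9 - 2 * g))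
    have hScl : IsClosed S := hc.preimage_isClosed_of_isClosed isClosed_Icc isClosed_Ici
    have hSc : IsCompact S := isCompact_Icc.of_isClosed_subset hScl Set.inter_subset_left
    have hSne : S.Nonempty := ⟨a, ⟨le_rfl, ha.2.le⟩, haq.le⟩
    obtain ⟨c, hcS, hcmax⟩ := hSc.exists_isGreatest hSne
    have hcq : 9 / (9 - 2 * g) ≤ buchQ m p c := hcS.2
    have hcb : c < b := lt_of_le_of_ne hcS.1.2 (by rintro rfl; linarith)
    have hmono : MonotoneOn (buchQ m p) (Set.Icc c b) := by
      refine monotoneOn_of_deriv_nonneg (convex_Icc c b)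
        (hc.mono (Set.Icc_subset_Icc_left hcS.1.1)) ?_ ?_
      · intro t ht
        rw [interior_Icc] at ht
        exact (hder t (hsub ⟨hcS.1.1.trans ht.1.le, ht.2.le⟩)).differentiableAt.differentiableWithinAt
      · intro t ht
        rw [interior_Icc] at ht
        have htI : t ∈ Set.Icc a b := ⟨hcS.1.1.trans ht.1.le, ht.2.le⟩
        refine hbar t (hsub htI) ?_
        by_contra hcon
        push Not at hcon
        have := hcmax (show t ∈ S from ⟨htI, hcon.le⟩)
        linarith [ht.1]
    have := hmono (Set.left_mem_Icc.2 hcb.le) (Set.right_mem_Icc.2 hcb.le) hcb.le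
    linarith
  -- the surface
  have hmR : 0 < m R := by
    have hmono : MonotoneOn m (Set.Icc 0 R) := by
      refine monotoneOn_of_hasDerivWithinAt_nonneg (convex_Icc 0 R) hm_cont
        (fun t ht => (hTOV_m t (by rwa [interior_Icc] at ht)).hasDerivWithinAt) ?_
      intro t ht
      rw [interior_Icc] at ht
      have := hfp t ⟨ht.1.le, ht.2⟩
      positivity
    have h1 := hm_pos (R / 2) ⟨by linarith, by linarith⟩
    have h2 := hmono (show R / 2 ∈ Set.Icc 0 R from ⟨by linarith, by linarith⟩)
      (Set.right_mem_Icc.2 hR.le) (by linarith)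
    linarith
  have hmt : Filter.Tendsto m (nhdsWithin R (Set.Iio R)) (nhds (m R)) := by
    have h2 := ((hm_cont R ⟨hR.le, le_rfl⟩).mono Set.Ioo_subset_Icc_self).tendsto
    rwa [nhdsWithin_Ioo_eq_nhdsLT hR] at h2
  have hpt : Filter.Tendsto p (nhdsWithin R (Set.Iio R)) (nhds (p R)) := by
    have h2 := ((hp_cont R ⟨hR.le, le_rfl⟩).mono Set.Ioo_subset_Icc_self).tendsto
    rwa [nhdsWithin_Ioo_eq_nhdsLT hR] at h2
  have hrt : Filter.Tendsto (fun r : ℝ => r) (nhdsWithin R (Set.Iio R)) (nhds R) :=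
    tendsto_nhdsWithin_of_tendsto_nhds Filter.tendsto_id
  have hPt := ((hrt.pow 3).const_mul (4 * Real.pi)).mul hpt
  have hlim := (((hmt.const_mul 2).div hrt hR.ne').const_sub 1).mul
    ((((hmt.const_mul 3).add hPt).div (hmt.add hPt) (by rw [hpR]; simpa using hmR.ne')).pow 2)
  have hfin : 9 / (9 - 2 * g) ≤ (1 - 2 * m R / R) *
      ((3 * m R + 4 * Real.pi * R ^ 3 * p R) / (m R + 4 * Real.pi * R ^ 3 * p R)) ^ 2 := by
    refine ge_of_tendsto hlim ?_
    filter_upwards [Ioo_mem_nhdsLT hR] with r hr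
    exact hmain r hr
  rw [hpR, mul_zero, add_zero, add_zero, mul_div_cancel_right₀ _ hmR.ne'] at hfin
  have e : (8 - 2 * g) / (9 - 2 * g) = 1 - (9 / (9 - 2 * g)) / 9 := by
    field_simp
    ring
  rw [e]
  linarith
end

section
/- Every regular perfect fluid solution with non-decreasing equation of state f that satisfies the dominant energy condition, i.e. p(r) < f(p(r)) for all r ∈ [0,R), obeys the surface bound 2M/R ≤ 6/7, where M = m(R) is the total mass and R the surface radius. -/
lemma mono_aux (a b : ℝ) (hab : a ≤ b) (g g' : ℝ → ℝ) (hc : ContinuousOn g (Set.Icc a b))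
    (hd : ∀ x ∈ Set.Ioo a b, HasDerivAt g (g' x) x) (hn : ∀ x ∈ Set.Ioo a b, 0 ≤ g' x) :
    g a ≤ g b := by
  have h : MonotoneOn g (Set.Icc a b) := by
    apply monotoneOn_of_deriv_nonneg (convex_Icc a b) hc
    · rw [interior_Icc]
      intro x hx
      exact (hd x hx).differentiableAt.differentiableWithinAt
    · rw [interior_Icc]
      intro x hx
      rw [(hd x hx).deriv]
      exact hn x hx
  exact h (Set.left_mem_Icc.2 hab) (Set.right_mem_Icc.2 hab) hab

lemma barrier_aux (a b c : ℝ) (hab : a ≤ b) (H H' : ℝ → ℝ)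
    (hd : ∀ x ∈ Set.Icc a b, HasDerivAt H (H' x) x)
    (hn : ∀ x ∈ Set.Icc a b, H x < c → 0 ≤ H' x) (ha : c ≤ H a) : c ≤ H b := by
  by_contra! hb
  have hc : ContinuousOn H (Set.Icc a b) := fun x hx => (hd x hx).continuousAt.continuousWithinAt
  have hK : IsCompact (Set.Icc a b ∩ H ⁻¹' Set.Ici c) :=
    isCompact_Icc.of_isClosed_subset (hc.preimage_isClosed_of_isClosed isClosed_Icc isClosed_Ici)
      Set.inter_subset_left
  obtain ⟨d, ⟨hd1, hd2⟩, hmax⟩ := hK.exists_isGreatest ⟨a, Set.left_mem_Icc.2 hab, ha⟩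
  have hdc : c ≤ H d := hd2
  have := mono_aux d b hd1.2 H H' (hc.mono (Set.Icc_subset_Icc_left hd1.1))
    (fun x hx => hd x ⟨hd1.1.trans hx.1.le, hx.2.le⟩) (by
      intro x hx
      have hx' : x ∈ Set.Icc a b := ⟨hd1.1.trans hx.1.le, hx.2.le⟩
      apply hn x hx'
      by_contra! hcx
      have := hmax ⟨hx', hcx⟩
      linarith [hx.1])
  linarith

/-- In the region where the Buchdahl functional may decrease, it is at least `1/7`. -/
lemma region_aux (m u r : ℝ) (hm : 0 < m) (hu : 0 < u) (hum : u ≤ 3 * m)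
    (h : (m + u) ^ 2 < 2 * u * (r - 2 * m)) :
    r * (m + u) ^ 2 ≤ 7 * (r - 2 * m) * (m + u / 3) ^ 2 := by
  have h1 : 0 ≤ 7 * (m + u / 3) ^ 2 - (m + u) ^ 2 - 4 * m * u := by
    nlinarith [mul_nonneg (sub_nonneg.2 hum) hu.le, mul_nonneg (sub_nonneg.2 hum) hm.le]
  have h2 : 0 < r - 2 * m := by
    by_contra! hh
    nlinarith [sq_nonneg (m + u), mul_nonneg hu.le (sub_nonneg.2 hh)]
  nlinarith [mul_nonneg h2.le h1, mul_nonneg hm.le (sub_nonneg.2 h.le)]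

/-- **Buchdahl-type bound under the dominant energy condition.**
Every regular perfect fluid solution (units `G = c = 1`) with a non-decreasing equation of
state `ρ = f(p)` that satisfies the dominant energy condition `p(r) < f(p(r))` for all
`r ∈ [0,R)` obeys `2M/R ≤ 6/7`, where `M = m(R)` and `R` is the surface radius. -/
theorem buchdahl_dominant_energy_bound
    (R : ℝ) (hR : 0 < R)
    (f : ℝ → ℝ)
    (hf_nonneg : ∀ q : ℝ, 0 ≤ q → 0 ≤ f q)
    (hf_mono : MonotoneOn f (Set.Ici 0))
    (hf_cont : ContinuousOn f (Set.Ici 0))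
    (hf_pos : ∀ q : ℝ, 0 < q → 0 < f q)
    (m p : ℝ → ℝ)
    (hm_cont : ContinuousOn m (Set.Icc 0 R))
    (hp_cont : ContinuousOn p (Set.Icc 0 R))
    (hm0 : m 0 = 0)
    (hm_pos : ∀ r ∈ Set.Ioo 0 R, 0 < m r)
    (h2m : ∀ r ∈ Set.Ioo 0 R, 2 * m r < r)
    (hp_pos : ∀ r ∈ Set.Ico 0 R, 0 < p r)
    (hpR : p R = 0)
    (hTOV_m : ∀ r ∈ Set.Ioo 0 R,
      HasDerivAt m (4 * Real.pi * r ^ 2 * f (p r)) r)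
    (hTOV_p : ∀ r ∈ Set.Ioo 0 R,
      HasDerivAt p (-(f (p r) * m r / r ^ 2) * (1 + p r / f (p r)) *
        (1 + 4 * Real.pi * r ^ 3 * p r / m r) * (1 - 2 * m r / r)⁻¹) r)
    (hreg : Filter.Tendsto (fun r => m r / r ^ 3) (nhdsWithin 0 (Set.Ioi 0))
      (nhds (4 * Real.pi / 3 * f (p 0))))
    (hdec : ∀ r ∈ Set.Ico 0 R, p r < f (p r)) :
    2 * m R / R ≤ 6 / 7 := by
  have hpi := Real.pi_pos
  have hp_nonneg : ∀ r ∈ Set.Icc 0 R, 0 ≤ p r := by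
    intro r hr
    rcases hr.2.lt_or_eq with h | h
    · exact (hp_pos r ⟨hr.1, h⟩).le
    · rw [h, hpR]
  have hw : ∀ r ∈ Set.Ioo 0 R, 0 < 1 - 2 * m r / r := by
    intro r hr
    have : 2 * m r / r < 1 := by rw [div_lt_one hr.1]; exact h2m r hr
    linarith
  -- simplified form of the pressure equation
  have hP : ∀ r ∈ Set.Ioo 0 R, HasDerivAt p
      (-((f (p r) + p r) * (m r + 4 * Real.pi * r ^ 3 * p r) / (r ^ 2 * (1 - 2 * m r / r)))) r := by
    intro r hr
    convert hTOV_p r hr using 1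
    have h1 := hm_pos r hr
    have h2 := hf_pos _ (hp_pos r ⟨hr.1.le, hr.2⟩)
    have h3 := hw r hr
    have h4 := hr.1
    generalize 1 - 2 * m r / r = w at *
    field_simp
  have hp_anti : ∀ a b, 0 ≤ a → a ≤ b → b ≤ R → p b ≤ p a := by
    intro a b ha hab hb
    have := mono_aux a b hab (fun x => -p x) (fun r => (f (p r) + p r) * (m r + 4 * Real.pi * r ^ 3 * p r) / (r ^ 2 * (1 - 2 * m r / r)))
      ((hp_cont.mono (Set.Icc_subset_Icc ha hb)).neg) (by
        intro x hx
        have := (hP x ⟨ha.trans_lt hx.1, hx.2.trans_le hb⟩).neg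
        rw [neg_neg] at this
        exact this) (by
        intro x hx
        have hx' : x ∈ Set.Ioo 0 R := ⟨ha.trans_lt hx.1, hx.2.trans_le hb⟩
        have h1 := hm_pos x hx'
        have h2 := hp_pos x ⟨hx'.1.le, hx'.2⟩
        have h3 := hf_pos _ h2
        have h4 := hw x hx'
        have h5 := hx'.1
        positivity)
    simpa using this
  have hrho : ∀ a b, 0 ≤ a → a ≤ b → b ≤ R → f (p b) ≤ f (p a) := by
    intro a b ha hab hb
    exact hf_mono (hp_nonneg b ⟨ha.trans hab, hb⟩) (hp_nonneg a ⟨ha, hab.trans hb⟩)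
      (hp_anti a b ha hab hb)
  have hmd : ∀ c : ℝ, ∀ r ∈ Set.Ioo 0 R, HasDerivAt (fun x => m x - 4 * Real.pi / 3 * c * x ^ 3)
      (4 * Real.pi * r ^ 2 * (f (p r) - c)) r := by
    intro c r hr
    have := (hTOV_m r hr).sub (((hasDerivAt_id r).pow 3).const_mul (4 * Real.pi / 3 * c))
    refine this.congr_deriv ?_
    simp
    ring
  have hm_lower : ∀ r ∈ Set.Ioo 0 R, 4 * Real.pi * r ^ 3 * f (p r) ≤ 3 * m r := by
    intro r hr
    have := mono_aux 0 r hr.1.le _ _ (by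
        have := hm_cont.mono (Set.Icc_subset_Icc_right hr.2.le)
        fun_prop) (fun x hx => hmd (f (p r)) x ⟨hx.1, hx.2.trans hr.2⟩) (by
        intro x hx
        have := hrho x r hx.1.le hx.2.le hr.2.le
        have h5 : 0 ≤ f (p x) - f (p r) := by linarith
        positivity)
    simp only [hm0] at this
    nlinarith [this]
  have hm_upper : ∀ r ∈ Set.Ioo 0 R, 3 * m r ≤ 4 * Real.pi * r ^ 3 * f (p 0) := by
    intro r hr
    have := mono_aux 0 r hr.1.le (fun x => -(m x - 4 * Real.pi / 3 * f (p 0) * x ^ 3)) _ (by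
        have := hm_cont.mono (Set.Icc_subset_Icc_right hr.2.le)
        fun_prop) (fun x hx => (hmd (f (p 0)) x ⟨hx.1, hx.2.trans hr.2⟩).neg) (by
        intro x hx
        have := hrho 0 x le_rfl hx.1.le (hx.2.trans hr.2).le
        have h5 : 0 ≤ f (p 0) - f (p x) := by linarith
        have h6 : 0 ≤ 4 * Real.pi * x ^ 2 * (f (p 0) - f (p x)) := by positivity
        linarith)
    simp only [hm0] at this
    nlinarith [this]
  -- the functional
  set H : ℝ → ℝ := fun r => (1 - 2 * m r / r) * (m r + 4 * Real.pi * r ^ 3 * p r / 3) ^ 2 /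
    (m r + 4 * Real.pi * r ^ 3 * p r) ^ 2 with hH
  set H' : ℝ → ℝ := fun r => (m r + 4 * Real.pi * r ^ 3 * p r / 3) /
    (m r + 4 * Real.pi * r ^ 3 * p r) ^ 3 * (2 / (3 * r ^ 2)) *
    (3 * m r - 4 * Real.pi * r ^ 3 * f (p r)) *
    ((m r + 4 * Real.pi * r ^ 3 * p r) ^ 2 -
      2 * (4 * Real.pi * r ^ 3 * p r) * (r - 2 * m r)) with hH'
  have hHd : ∀ r ∈ Set.Ioo 0 R, HasDerivAt H (H' r) r := by
    intro r hr
    have h0 := hr.1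
    have h1 := hm_pos r hr
    have h2 := hp_pos r ⟨hr.1.le, hr.2⟩
    have h4 := hw r hr
    have hQ : 0 < m r + 4 * Real.pi * r ^ 3 * p r := by positivity
    have hrm : 0 < r - 2 * m r := by linarith [h2m r hr]
    have dm := hTOV_m r hr
    have dp := hP r hr
    have du := ((((hasDerivAt_id r).pow 3).const_mul (4 * Real.pi)).mul dp)
    have dw := (((dm.const_mul 2).div (hasDerivAt_id r) h0.ne').const_sub 1)
    have dN := (dm.add (du.div_const 3)).pow 2
    have dQ := (dm.add du).pow 2
    have d := (dw.mul dN).div dQ (by simpa using (pow_pos hQ 2).ne')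
    have hww : 1 - 2 * m r / r = (r - 2 * m r) / r := by field_simp
    refine d.congr_deriv ?_
    simp only [hH', id, Pi.add_apply, Pi.mul_apply, Pi.pow_apply, Pi.div_apply, hww]
    simp
    generalize f (p r) = F at *
    generalize p r = P at *
    generalize m r = M at *
    obtain ⟨W, hW⟩ : ∃ W, W = r - 2 * M := ⟨_, rfl⟩
    obtain ⟨Q, hQe⟩ : ∃ Q, Q = M + 4 * Real.pi * r ^ 3 * P := ⟨_, rfl⟩
    clear d dQ dN dw du dp dm h4 hww
    rw [← hW] at hrm ⊢
    rw [← hQe] at hQ ⊢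
    have hM : M = Q - 4 * Real.pi * r ^ 3 * P := by linarith
    field_simp
    subst hM
    ring
  have hregion : ∀ r ∈ Set.Ioo 0 R, (m r + 4 * Real.pi * r ^ 3 * p r) ^ 2 <
      2 * (4 * Real.pi * r ^ 3 * p r) * (r - 2 * m r) → 1 / 7 ≤ H r := by
    intro r hr h
    have h0 := hr.1
    have h1 := hm_pos r hr
    have h2 := hp_pos r ⟨hr.1.le, hr.2⟩
    have hQ : 0 < m r + 4 * Real.pi * r ^ 3 * p r := by positivity
    have h3 : 4 * Real.pi * r ^ 3 * p r ≤ 3 * m r := by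
      refine le_trans ?_ (hm_lower r hr)
      have := (hdec r ⟨hr.1.le, hr.2⟩).le
      gcongr
    have := region_aux (m r) _ r h1 (by positivity) h3 h
    have hww : 1 - 2 * m r / r = (r - 2 * m r) / r := by field_simp
    simp only [hH, hww]
    rw [le_div_iff₀ (by positivity), div_mul_eq_mul_div, div_mul_eq_mul_div, div_le_div_iff₀ (by norm_num) h0]
    linarith
  have hnear : ∀ r1 ∈ Set.Ioo 0 R, ∃ r ∈ Set.Ioo 0 r1, (m r + 4 * Real.pi * r ^ 3 * p r) ^ 2 <
      2 * (4 * Real.pi * r ^ 3 * p r) * (r - 2 * m r) := by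
    intro r1 hr1
    have hc := hp_pos r1 ⟨hr1.1.le, hr1.2⟩
    have hp0 := hp_pos 0 ⟨le_rfl, hR⟩
    have hf0 := hf_pos _ hp0
    obtain ⟨K, hK⟩ : ∃ K, K = 4 * Real.pi * (f (p 0) + p 0) := ⟨_, rfl⟩
    have hK0 : 0 < K := by rw [hK]; positivity
    -- need K^2 r^2 < 8 π c (1 - 2 K r^2)
    obtain ⟨r, hrlt, hr0, hsm⟩ : ∃ r, r < r1 ∧ 0 < r ∧
        K ^ 2 * r ^ 2 < 8 * Real.pi * p r1 * (1 - 2 * K * r ^ 2) := by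
      have ht : Filter.Tendsto (fun r : ℝ => 8 * Real.pi * p r1 * (1 - 2 * K * r ^ 2) - K ^ 2 * r ^ 2)
          (nhdsWithin 0 (Set.Ioi 0)) (nhds (8 * Real.pi * p r1 * (1 - 2 * K * 0 ^ 2) - K ^ 2 * 0 ^ 2)) := by
        apply Filter.Tendsto.mono_left _ nhdsWithin_le_nhds
        exact Continuous.tendsto (by fun_prop) 0
      have hpos : 0 < 8 * Real.pi * p r1 * (1 - 2 * K * 0 ^ 2) - K ^ 2 * 0 ^ 2 := by
        simp; positivity
      have e1 := ht.eventually (lt_mem_nhds hpos)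
      have e2 : ∀ᶠ r : ℝ in nhdsWithin 0 (Set.Ioi 0), r ∈ Set.Ioo 0 r1 := Ioo_mem_nhdsGT hr1.1
      obtain ⟨r, h1, h2⟩ := (e1.and e2).exists
      exact ⟨r, h2.2, h2.1, by linarith⟩
    have hr : r ∈ Set.Ioo 0 R := ⟨hr0, hrlt.trans hr1.2⟩
    refine ⟨r, ⟨hr0, hrlt⟩, ?_⟩
    have h1 := hm_pos r hr
    have h2 := hp_pos r ⟨hr.1.le, hr.2⟩
    have hpc := hp_anti r r1 hr0.le hrlt.le hr1.2.le
    have hpu := hp_anti 0 r le_rfl hr0.le hr.2.le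
    have hmu := hm_upper r hr
    have hr3 : 0 < r ^ 3 := by positivity
    have a1 : 4 * Real.pi * r ^ 3 * p r ≤ 4 * Real.pi * r ^ 3 * p 0 := by gcongr
    have a2 : 0 < 4 * Real.pi * r ^ 3 * p 0 := by positivity
    have hQ : m r + 4 * Real.pi * r ^ 3 * p r ≤ K * r ^ 3 := by
      rw [hK]; nlinarith
    have hmK : m r ≤ K * r ^ 3 := by
      rw [hK]; nlinarith
    have hlow : 0 < 1 - 2 * K * r ^ 2 := by
      by_contra! hh
      have : 8 * Real.pi * p r1 * (1 - 2 * K * r ^ 2) ≤ 0 :=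
        mul_nonpos_of_nonneg_of_nonpos (by positivity) hh
      have : 0 ≤ K ^ 2 * r ^ 2 := by positivity
      linarith
    calc (m r + 4 * Real.pi * r ^ 3 * p r) ^ 2 ≤ (K * r ^ 3) ^ 2 := by gcongr
      _ = r ^ 4 * (K ^ 2 * r ^ 2) := by ring
      _ < r ^ 4 * (8 * Real.pi * p r1 * (1 - 2 * K * r ^ 2)) := by gcongr
      _ = 2 * (4 * Real.pi * r ^ 3 * p r1) * (r * (1 - 2 * K * r ^ 2)) := by ring
      _ ≤ 2 * (4 * Real.pi * r ^ 3 * p r) * (r * (1 - 2 * K * r ^ 2)) := by gcongr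
      _ ≤ 2 * (4 * Real.pi * r ^ 3 * p r) * (r - 2 * m r) := by
        gcongr
        linarith
  have hmain : ∀ r ∈ Set.Ioo 0 R, 1 / 7 ≤ H r := by
    intro b hb
    obtain ⟨a, ha, haE⟩ := hnear b hb
    have hsub : ∀ x ∈ Set.Icc a b, x ∈ Set.Ioo 0 R :=
      fun x hx => ⟨ha.1.trans_le hx.1, hx.2.trans_lt hb.2⟩
    refine barrier_aux a b (1 / 7) ha.2.le H H' (fun x hx => hHd x (hsub x hx)) ?_
      (hregion a ⟨ha.1, ha.2.trans hb.2⟩ haE)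
    intro x hx hlt
    have hx' := hsub x hx
    have h0 := hx'.1
    have h1 := hm_pos x hx'
    have h2 := hp_pos x ⟨hx'.1.le, hx'.2⟩
    have h3 : 0 ≤ 3 * m x - 4 * Real.pi * x ^ 3 * f (p x) := by linarith [hm_lower x hx']
    have h4 : 0 ≤ (m x + 4 * Real.pi * x ^ 3 * p x) ^ 2 -
      2 * (4 * Real.pi * x ^ 3 * p x) * (x - 2 * m x) := by
      by_contra! hh
      have := hregion x hx' (by linarith)
      linarith
    simp only [hH']
    refine mul_nonneg (mul_nonneg ?_ h3) h4
    positivity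
  -- pass to the limit at the surface
  have hMpos : 0 < m R := by
    have hh : R / 2 ∈ Set.Ioo 0 R := ⟨by linarith, by linarith⟩
    have := mono_aux (R / 2) R hh.2.le m _ (hm_cont.mono (Set.Icc_subset_Icc_left hh.1.le))
      (fun x hx => hTOV_m x ⟨hh.1.trans hx.1, hx.2⟩) (by
        intro x hx
        have := hf_nonneg _ (hp_nonneg x ⟨(hh.1.trans hx.1).le, hx.2.le⟩)
        positivity)
    linarith [hm_pos _ hh]
  have hmR : Filter.Tendsto m (nhdsWithin R (Set.Ioo 0 R)) (nhds (m R)) :=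
    (hm_cont R ⟨hR.le, le_rfl⟩).mono Set.Ioo_subset_Icc_self
  have hpR' : Filter.Tendsto p (nhdsWithin R (Set.Ioo 0 R)) (nhds (p R)) :=
    (hp_cont R ⟨hR.le, le_rfl⟩).mono Set.Ioo_subset_Icc_self
  have hid : Filter.Tendsto (fun x : ℝ => x) (nhdsWithin R (Set.Ioo 0 R)) (nhds R) :=
    Filter.Tendsto.mono_left Filter.tendsto_id nhdsWithin_le_nhds
  have hu := ((hid.pow 3).const_mul (4 * Real.pi)).mul hpR'
  have hlim : Filter.Tendsto H (nhdsWithin R (Set.Ioo 0 R)) (nhds (H R)) :=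
    ((((hmR.const_mul 2).div hid hR.ne').const_sub 1).mul ((hmR.add (hu.div_const 3)).pow 2)).div
      ((hmR.add hu).pow 2) (by rw [hpR]; simpa using hMpos.ne')
  have hne : (nhdsWithin R (Set.Ioo 0 R)).NeBot := by
    rw [← mem_closure_iff_nhdsWithin_neBot, closure_Ioo hR.ne]
    exact ⟨hR.le, le_rfl⟩
  have hfin : 1 / 7 ≤ H R := by
    apply ge_of_tendsto hlim
    filter_upwards [self_mem_nhdsWithin] with x hx using hmain x hx
  have hHR : H R = 1 - 2 * m R / R := by
    simp only [hH, hpR]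
    have := hMpos.ne'
    field_simp
    simp
    ring
  linarith
end

section
/- For every regular perfect fluid solution with non-decreasing equation of state f, the density never exceeds the average density: 4π r³ f(p(r)) ≤ 3 m(r) for all r ∈ (0,R). (Equivalently, in the dynamical-systems variables, U ≤ 3/4 along every regular solution.) -/
/-- **The density never exceeds the average density.**
For every regular perfect fluid solution (units `G = c = 1`) with a non-decreasing
equation of state `ρ = f(p)`, one has `4π r³ f(p(r)) ≤ 3 m(r)` for all `r ∈ (0,R)`;
i.e. `ρ(r) ≤ 3m(r)/(4π r³)` (equivalently `U ≤ 3/4` in dynamical-systems variables). -/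
theorem density_le_average_density
    (R : ℝ) (hR : 0 < R)
    (f : ℝ → ℝ)
    (hf_nonneg : ∀ q : ℝ, 0 ≤ q → 0 ≤ f q)
    (hf_mono : MonotoneOn f (Set.Ici 0))
    (hf_cont : ContinuousOn f (Set.Ici 0))
    (hf_pos : ∀ q : ℝ, 0 < q → 0 < f q)
    (m p : ℝ → ℝ)
    (hm_cont : ContinuousOn m (Set.Icc 0 R))
    (hp_cont : ContinuousOn p (Set.Icc 0 R))
    (hm0 : m 0 = 0)
    (hm_pos : ∀ r ∈ Set.Ioo 0 R, 0 < m r)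
    (h2m : ∀ r ∈ Set.Ioo 0 R, 2 * m r < r)
    (hp_pos : ∀ r ∈ Set.Ico 0 R, 0 < p r)
    (hpR : p R = 0)
    (hTOV_m : ∀ r ∈ Set.Ioo 0 R,
      HasDerivAt m (4 * Real.pi * r ^ 2 * f (p r)) r)
    (hTOV_p : ∀ r ∈ Set.Ioo 0 R,
      HasDerivAt p (-(f (p r) * m r / r ^ 2) * (1 + p r / f (p r)) *
        (1 + 4 * Real.pi * r ^ 3 * p r / m r) * (1 - 2 * m r / r)⁻¹) r)
    (hreg : Filter.Tendsto (fun r => m r / r ^ 3) (nhdsWithin 0 (Set.Ioi 0))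
      (nhds (4 * Real.pi / 3 * f (p 0)))) :
    ∀ r ∈ Set.Ioo 0 R, 4 * Real.pi * r ^ 3 * f (p r) ≤ 3 * m r := by
  intro r hr
  have hpi := Real.pi_pos
  have hanti : AntitoneOn p (Set.Icc 0 R) := by
    apply antitoneOn_of_hasDerivWithinAt_nonpos (convex_Icc 0 R) hp_cont
    · intro x hx
      rw [interior_Icc] at hx
      exact (hTOV_p x hx).hasDerivWithinAt
    · intro x hx
      rw [interior_Icc] at hx
      have hx0 : 0 < x := hx.1
      have hp := hp_pos x ⟨hx.1.le, hx.2⟩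
      have hf := hf_pos _ hp
      have hm := hm_pos x hx
      have h1 : 0 < 1 - 2 * m x / x := by
        have : 2 * m x / x < 1 := (div_lt_one hx0).2 (h2m x hx)
        linarith
      have : 0 ≤ f (p x) * m x / x ^ 2 * (1 + p x / f (p x)) *
        (1 + 4 * Real.pi * x ^ 3 * p x / m x) * (1 - 2 * m x / x)⁻¹ := by positivity
      linarith
  have hsub : Set.Icc 0 r ⊆ Set.Icc 0 R := Set.Icc_subset_Icc_right hr.2.le
  have hmono : MonotoneOn (fun s => m s - 4 * Real.pi / 3 * f (p r) * s ^ 3) (Set.Icc 0 r) := by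
    apply monotoneOn_of_hasDerivWithinAt_nonneg (convex_Icc 0 r)
      (f' := fun s => 4 * Real.pi * s ^ 2 * f (p s)
        - 4 * Real.pi / 3 * f (p r) * (3 * s ^ 2))
    · exact (hm_cont.mono hsub).sub (by fun_prop)
    · intro x hx
      rw [interior_Icc] at hx
      have h := (hasDerivAt_pow 3 x).const_mul (4 * Real.pi / 3 * f (p r))
      have h2 := (hTOV_m x ⟨hx.1, hx.2.trans hr.2⟩).sub h
      norm_num at h2
      exact h2.hasDerivWithinAt
    · intro x hx
      rw [interior_Icc] at hx
      have hle : p r ≤ p x :=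
        hanti (hsub ⟨hx.1.le, hx.2.le⟩) ⟨hr.1.le, hr.2.le⟩ hx.2.le
      have hpr := hp_pos r ⟨hr.1.le, hr.2⟩
      have hff : f (p r) ≤ f (p x) := hf_mono hpr.le (hpr.le.trans hle) hle
      have : 0 ≤ 4 * Real.pi * x ^ 2 * (f (p x) - f (p r)) :=
        mul_nonneg (by positivity) (sub_nonneg.2 hff)
      linarith
  have h := hmono ⟨le_rfl, hr.1.le⟩ ⟨hr.1.le, le_rfl⟩ hr.1.le
  simp only [hm0] at h
  linarith
end
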